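/- When distortion is measured at the intermediate layer Y, the model-splitting approach and the direct coding approach have equal minimal rates: for every D > 0, R_XY(D;Y) = R_Y(D;Y). -/

import Mathlib

open scoped BigOperators

/-- Joint distribution P(a,b) = p(a)·k(a)(b) induced by a source `p` and a channel `k`,
as a real number. -/
noncomputable def jointP {A B : Type*} [Fintype A] [Fintype B] (p : PMF A) (k : A → PMF B)
    (a : A) (b : B) : ℝ :=
  (p a * k a b).toReal

/-- Marginal distribution of the second coordinate of the joint induced by `(p, k)`. -/
noncomputable def margSnd {A B : Type*} [Fintype A] [Fintype B] (p : PMF A) (k : A → PMF B)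
    (b : B) : ℝ :=
  ∑ a, jointP p k a b

/-- Mutual information I(A;B) = ∑_{a,b} P(a,b)·log(P(a,b)/(P(a)·P(b))) of the joint
induced by `(p, k)`; the convention 0·log 0 = 0 holds automatically in Lean. -/
noncomputable def mutualInfo {A B : Type*} [Fintype A] [Fintype B] (p : PMF A)
    (k : A → PMF B) : ℝ :=
  ∑ a, ∑ b, jointP p k a b * Real.log (jointP p k a b / ((p a).toReal * margSnd p k b))

/-- Expected distortion E[d(A,B)] under the joint induced by `(p, k)`. -/
noncomputable def expDist {A B : Type*} [Fintype A] [Fintype B] (p : PMF A) (k : A → PMF B)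
    (d : A → B → ℝ) : ℝ :=
  ∑ a, ∑ b, jointP p k a b * d a b

/-- Rate-distortion function: infimum of mutual information over all channels `A → PMF B`
meeting the expected-distortion constraint `≤ D`. -/
noncomputable def rate {A B : Type*} [Fintype A] [Fintype B] (p : PMF A) (d : A → B → ℝ)
    (D : ℝ) : ℝ :=
  sInf { r : ℝ | ∃ k : A → PMF B, expDist p k d ≤ D ∧ r = mutualInfo p k }

/-- Conditional probability P(A = a | B = b) under the joint induced by `(p, k)`. -/
noncomputable def condProb {A B : Type*} [Fintype A] [Fintype B] (p : PMF A) (k : A → PMF B)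
    (a : A) (b : B) : ℝ :=
  jointP p k a b / margSnd p k b

/-- Log-sum inequality with weights `q` scaled by a nonnegative constant `m`. -/
lemma log_sum_inequality {ι : Type*} (s : Finset ι) (a q : ι → ℝ) (m : ℝ)
    (ha : ∀ i ∈ s, 0 ≤ a i) (hq : ∀ i ∈ s, 0 ≤ q i) (hm : 0 ≤ m)
    (hac : ∀ i ∈ s, q i * m = 0 → a i = 0) :
    (∑ i ∈ s, a i) * Real.log ((∑ i ∈ s, a i) / ((∑ i ∈ s, q i) * m)) ≤
      ∑ i ∈ s, a i * Real.log (a i / (q i * m)) := by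
  set S := ∑ i ∈ s, a i with hS
  rcases (Finset.sum_nonneg ha).eq_or_lt with h0 | hpos
  · have hz := (Finset.sum_eq_zero_iff_of_nonneg ha).1 h0.symm
    rw [hS, ← h0, zero_mul]
    exact (Finset.sum_eq_zero fun i hi => by rw [hz i hi, zero_mul]).ge
  · obtain ⟨j, hj, haj⟩ : ∃ j ∈ s, a j ≠ 0 := by
      by_contra! h
      exact hpos.ne' (Finset.sum_eq_zero h)
    have hqm : 0 < q j * m :=
      (mul_nonneg (hq j hj) hm).lt_of_ne fun h => haj (hac j hj h.symm)
    have hQ : 0 < (∑ i ∈ s, q i) * m := by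
      rw [Finset.sum_mul]
      exact hqm.trans_le
        (Finset.single_le_sum (f := fun i => q i * m) (fun i hi => mul_nonneg (hq i hi) hm) hj)
    set c := S / ((∑ i ∈ s, q i) * m) with hc
    have hcpos : 0 < c := div_pos hpos hQ
    have tangent : ∀ i ∈ s,
        a i * Real.log c + a i - c * (q i * m) ≤ a i * Real.log (a i / (q i * m)) := by
      intro i hi
      rcases (ha i hi).eq_or_lt with h | h
      · rw [← h]
        have := mul_nonneg hcpos.le (mul_nonneg (hq i hi) hm)
        simpa using this
      · have hr : 0 < q i * m :=
          (mul_nonneg (hq i hi) hm).lt_of_ne fun e => h.ne' (hac i hi e.symm)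
        have hlog := Real.log_le_sub_one_of_pos (div_pos (mul_pos hcpos hr) h)
        rw [Real.log_div (mul_pos hcpos hr).ne' h.ne', Real.log_mul hcpos.ne' hr.ne'] at hlog
        rw [Real.log_div h.ne' hr.ne']
        have hmul := mul_le_mul_of_nonneg_left hlog h.le
        have hcancel : a i * (c * (q i * m) / a i - 1) = c * (q i * m) - a i := by
          field_simp
        rw [hcancel] at hmul
        linarith
    have hsum := Finset.sum_le_sum tangent
    rw [Finset.sum_sub_distrib, Finset.sum_add_distrib, ← Finset.sum_mul, ← Finset.mul_sum,
      ← Finset.sum_mul, ← hS, hc, div_mul_cancel₀ _ hQ.ne', ← hc] at hsum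
    linarith

section

variable {A B C : Type*} [Fintype A] [Fintype B] [Fintype C]

lemma jointP_nonneg (p : PMF A) (k : A → PMF B) (a : A) (b : B) : 0 ≤ jointP p k a b :=
  ENNReal.toReal_nonneg

lemma margSnd_nonneg (p : PMF A) (k : A → PMF B) (b : B) : 0 ≤ margSnd p k b :=
  Finset.sum_nonneg fun _ _ => jointP_nonneg _ _ _ _

lemma jointP_eq_zero_of_mul_margSnd_eq_zero (p : PMF A) (k : A → PMF B) (a : A) (b : B)
    (h : (p a).toReal * margSnd p k b = 0) : jointP p k a b = 0 := by
  rcases mul_eq_zero.1 h with h | h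
  · rw [jointP, ENNReal.toReal_mul, h, zero_mul]
  · exact (Finset.sum_eq_zero_iff_of_nonneg fun _ _ => jointP_nonneg _ _ _ _).1 h a
      (Finset.mem_univ a)

lemma PMF.sum_toReal_eq_one (p : PMF A) : ∑ a, (p a).toReal = 1 := by
  rw [← ENNReal.toReal_sum fun a _ => p.apply_ne_top a, ← tsum_fintype (L := .unconditional A),
    p.tsum_coe, ENNReal.toReal_one]

lemma mutualInfo_nonneg (p : PMF A) (k : A → PMF B) : 0 ≤ mutualInfo p k := by
  rw [mutualInfo, Finset.sum_comm]
  refine Finset.sum_nonneg fun b _ => ?_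
  refine le_trans ?_ (log_sum_inequality Finset.univ (fun a => jointP p k a b)
    (fun a => (p a).toReal) (margSnd p k b) (fun a _ => jointP_nonneg _ _ _ _)
    (fun a _ => ENNReal.toReal_nonneg) (margSnd_nonneg _ _ _)
    fun a _ => jointP_eq_zero_of_mul_margSnd_eq_zero p k a b)
  rw [PMF.sum_toReal_eq_one, one_mul, ← margSnd]
  rcases eq_or_ne (margSnd p k b) 0 with h | h
  · simp [h]
  · simp [div_self h]

lemma bddBelow_achievable_rates (p : PMF A) (d : A → B → ℝ) (D : ℝ) :
    BddBelow { r : ℝ | ∃ k : A → PMF B, expDist p k d ≤ D ∧ r = mutualInfo p k } := by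
  refine ⟨0, ?_⟩
  rintro r ⟨k, -, rfl⟩
  exact mutualInfo_nonneg p k

open scoped Classical in
lemma PMF.map_apply_eq_sum_fiber {A C : Type*} [Fintype A] (p : PMF A) (g : A → C) (c : C) :
    p.map g c = ∑ a with g a = c, p a := by
  rw [PMF.map_apply, tsum_fintype, Finset.sum_filter]
  simp only [eq_comm]

open scoped Classical in
lemma PMF.toReal_map_apply {A C : Type*} [Fintype A] (p : PMF A) (g : A → C) (c : C) :
    (p.map g c).toReal = ∑ a with g a = c, (p a).toReal := by
  rw [PMF.map_apply_eq_sum_fiber, ENNReal.toReal_sum fun a _ => p.apply_ne_top a]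

open scoped Classical in
/-- `k'` is the channel that `k` induces on the feature `g`: its joint law with the pushforward
source is obtained by summing the joint law of `k` over the fibers of `g`. -/
def IsInducedChannel (p : PMF A) (g : A → C) (k : A → PMF B) (k' : C → PMF B) : Prop :=
  ∀ c b, jointP (p.map g) k' c b = ∑ a with g a = c, jointP p k a b

lemma isInducedChannel_comp (p : PMF A) (g : A → C) (k : C → PMF B) :
    IsInducedChannel p g (fun a => k (g a)) k := by
  classical
  intro c b
  simp only [jointP, ENNReal.toReal_mul]
  rw [PMF.toReal_map_apply, Finset.sum_mul]
  refine Finset.sum_congr rfl fun a ha => ?_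
  rw [(Finset.mem_filter.1 ha).2]

lemma exists_isInducedChannel [Nonempty B] (p : PMF A) (g : A → C) (k : A → PMF B) :
    ∃ k' : C → PMF B, IsInducedChannel p g k k' := by
  classical
  have hfiber : ∀ c, ∃ μ : PMF B, ∀ b, p.map g c * μ b = ∑ a with g a = c, p a * k a b := by
    intro c
    rcases eq_or_ne (p.map g c) 0 with h | h
    · refine ⟨PMF.pure (Classical.arbitrary B), fun b => ?_⟩
      rw [h, zero_mul]
      rw [PMF.map_apply_eq_sum_fiber, Finset.sum_eq_zero_iff] at h
      refine (Finset.sum_eq_zero fun a ha => ?_).symm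
      rw [h a ha, zero_mul]
    · have htop := (p.map g).apply_ne_top c
      refine ⟨PMF.ofFintype (fun b => (p.map g c)⁻¹ * ∑ a with g a = c, p a * k a b) ?_,
        fun b => ?_⟩
      · rw [← Finset.mul_sum, Finset.sum_comm]
        simp only [← Finset.mul_sum]
        have hk : ∀ a, ∑ b, k a b = 1 := fun a => by
          rw [← tsum_fintype (L := .unconditional B), (k a).tsum_coe]
        simp only [hk, mul_one]
        convert ENNReal.inv_mul_cancel h htop
        rw [PMF.map_apply_eq_sum_fiber]
      · rw [PMF.ofFintype_apply, ← mul_assoc, ENNReal.mul_inv_cancel h htop, one_mul]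
  choose k' hk' using hfiber
  refine ⟨k', fun c b => ?_⟩
  rw [jointP, hk', ENNReal.toReal_sum fun a _ =>
    ENNReal.mul_ne_top (p.apply_ne_top a) ((k a).apply_ne_top b)]
  simp only [jointP]

namespace IsInducedChannel

variable {p : PMF A} {g : A → C} {k : A → PMF B} {k' : C → PMF B}

lemma margSnd_eq (h : IsInducedChannel p g k k') (b : B) :
    margSnd (p.map g) k' b = margSnd p k b := by
  classical
  simp only [margSnd, h _ b]
  exact Finset.sum_fiberwise Finset.univ g fun a => jointP p k a b

lemma sum_jointP_mul (h : IsInducedChannel p g k k') (f : C → B → ℝ) :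
    ∑ c, ∑ b, jointP (p.map g) k' c b * f c b = ∑ a, ∑ b, jointP p k a b * f (g a) b := by
  classical
  rw [← Finset.sum_fiberwise Finset.univ g]
  refine Finset.sum_congr rfl fun c _ => ?_
  rw [Finset.sum_comm]
  refine Finset.sum_congr rfl fun b _ => ?_
  rw [h c b, Finset.sum_mul]
  refine Finset.sum_congr rfl fun a ha => ?_
  rw [(Finset.mem_filter.1 ha).2]

lemma expDist_eq (h : IsInducedChannel p g k k') (d : C → B → ℝ) :
    expDist (p.map g) k' d = expDist p k fun a b => d (g a) b :=
  h.sum_jointP_mul d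

/-- Data processing inequality for a deterministic feature of the source. -/
lemma mutualInfo_le (h : IsInducedChannel p g k k') :
    mutualInfo (p.map g) k' ≤ mutualInfo p k := by
  classical
  rw [mutualInfo, mutualInfo, ← Finset.sum_fiberwise Finset.univ g]
  refine Finset.sum_le_sum fun c _ => ?_
  rw [Finset.sum_comm]
  refine Finset.sum_le_sum fun b _ => ?_
  rw [h.margSnd_eq, h c b, PMF.toReal_map_apply]
  exact log_sum_inequality (Finset.univ.filter fun a => g a = c) (fun a => jointP p k a b)
    (fun a => (p a).toReal) (margSnd p k b) (fun a _ => jointP_nonneg _ _ _ _)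
    (fun a _ => ENNReal.toReal_nonneg) (margSnd_nonneg _ _ _)
    fun a _ => jointP_eq_zero_of_mul_margSnd_eq_zero p k a b

end IsInducedChannel

lemma mutualInfo_comp (p : PMF A) (g : A → C) (k : C → PMF B) :
    mutualInfo p (fun a => k (g a)) = mutualInfo (p.map g) k := by
  classical
  have h := isInducedChannel_comp p g k
  rw [mutualInfo, mutualInfo, h.sum_jointP_mul]
  refine Finset.sum_congr rfl fun a _ => Finset.sum_congr rfl fun b _ => ?_
  rw [h.margSnd_eq]
  rcases eq_or_ne (p a).toReal 0 with hp | hp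
  · simp [jointP, ENNReal.toReal_mul, hp]
  · have hmap : (p.map g (g a)).toReal ≠ 0 := by
      rw [PMF.toReal_map_apply]
      refine (((ENNReal.toReal_nonneg).lt_of_ne hp.symm).trans_le ?_).ne'
      exact Finset.single_le_sum (f := fun a => (p a).toReal)
        (fun _ _ => ENNReal.toReal_nonneg) (by simp)
    congr 2
    simp only [jointP, ENNReal.toReal_mul]
    rw [mul_div_mul_left _ _ hp, mul_div_mul_left _ _ hmap]

end

/-- With distortion measured at the intermediate layer Y = g(X), for every
D > 0, R_XY(D;Y) = R_Y(D;Y). -/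
theorem direct_eq_split_at_intermediate
    {𝒳 𝒴 : Type*} [Fintype 𝒳] [Fintype 𝒴] [Nonempty 𝒳] [Nonempty 𝒴]
    (pX : PMF 𝒳) (g : 𝒳 → 𝒴)
    (dY : 𝒴 → 𝒴 → ℝ) (hdY : ∀ y y', 0 ≤ dY y y')
    (D : ℝ) (hD : 0 < D) :
    rate pX (fun x yhat => dY (g x) yhat) D = rate (pX.map g) dY D := by
  have hsub : { r : ℝ | ∃ k : 𝒴 → PMF 𝒴, expDist (pX.map g) k dY ≤ D ∧
        r = mutualInfo (pX.map g) k } ⊆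
      { r : ℝ | ∃ k : 𝒳 → PMF 𝒴, expDist pX k (fun x yhat => dY (g x) yhat) ≤ D ∧
        r = mutualInfo pX k } := by
    rintro r ⟨k, hk, rfl⟩
    exact ⟨fun x => k (g x), (isInducedChannel_comp pX g k).expDist_eq dY ▸ hk,
      (mutualInfo_comp pX g k).symm⟩
  have hdom : ∀ k : 𝒳 → PMF 𝒴, expDist pX k (fun x yhat => dY (g x) yhat) ≤ D →
      ∃ k' : 𝒴 → PMF 𝒴, expDist (pX.map g) k' dY ≤ D ∧
        mutualInfo (pX.map g) k' ≤ mutualInfo pX k := by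
    intro k hk
    obtain ⟨k', hk'⟩ := exists_isInducedChannel pX g k
    exact ⟨k', (hk'.expDist_eq dY).trans_le hk, hk'.mutualInfo_le⟩
  unfold rate
  rcases Set.eq_empty_or_nonempty { r : ℝ | ∃ k : 𝒳 → PMF 𝒴,
      expDist pX k (fun x yhat => dY (g x) yhat) ≤ D ∧ r = mutualInfo pX k } with he | hne
  · rw [he, Set.subset_eq_empty hsub he]
  · apply le_antisymm
    · obtain ⟨_, k, hk, -⟩ := hne
      obtain ⟨k', hk', -⟩ := hdom k hk
      exact csInf_le_csInf (bddBelow_achievable_rates _ _ _) ⟨_, k', hk', rfl⟩ hsub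
    · refine le_csInf hne ?_
      rintro r ⟨k, hk, rfl⟩
      obtain ⟨k', hk', hle⟩ := hdom k hk
      exact (csInf_le (bddBelow_achievable_rates _ _ _) ⟨k', hk', rfl⟩).trans hle
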